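/- Let z_s, z_m ∈ ℂ and let z = z_s·I + z_m·(J − I) be the 3×3 matrix of a balanced three-phase line (equal self-impedances z_s on the diagonal and equal mutual impedances z_m off the diagonal), where J is the all-ones 3×3 matrix. Then the sequence-domain impedance z⁰¹² = Aᴴ·z·A is the diagonal matrix diag(z_s + 2z_m, z_s − z_m, z_s − z_m). -/

import Mathlib

/-!
Since `ω` is a primitive cube root of unity, `1 + ω + ω² = 0` and `conj ω = ω²`. Hence the columns
of `symA` are orthonormal eigenvectors of every circulant matrix. For `z`, the constant column has eigenvalue
`zs + 2 * zm` and the two columns orthogonal to it have eigenvalue `zs - zm`. The product is checked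
entrywise: `conjTranspose_symA` removes the conjugation, after which each entry is an identity
modulo `1 + ω + ω² = 0`.
-/

open Matrix

noncomputable def ω : ℂ := Complex.exp (2 * Real.pi * Complex.I / 3)

noncomputable def symA : Matrix (Fin 3) (Fin 3) ℂ :=
  ((Real.sqrt 3 : ℂ)⁻¹) • !![1, 1, 1; 1, ω^2, ω; 1, ω, ω^2]

theorem isPrimitiveRoot_ω : IsPrimitiveRoot ω 3 := by
  simpa [ω] using Complex.isPrimitiveRoot_exp 3 (by norm_num)

theorem one_add_ω_add_sq : 1 + ω + ω ^ 2 = 0 := by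
  simpa [Finset.sum_range_succ] using isPrimitiveRoot_ω.geom_sum_eq_zero (by norm_num)

theorem conj_ω : star ω = ω ^ 2 := by
  have h3 : ω ^ 3 = 1 := isPrimitiveRoot_ω.pow_eq_one
  have hn : ‖ω‖ = 1 := Complex.norm_eq_one_of_pow_eq_one h3 (by norm_num)
  have h1 : ω * star ω = 1 := by
    have := Complex.mul_conj' ω
    rw [hn] at this
    simpa using this
  -- Multiply `ω * star ω = 1` by `ω²` and use `ω³ = 1`.
  linear_combination ω ^ 2 * h1 - star ω * h3

theorem conjTranspose_symA :
    symAᴴ = ((Real.sqrt 3 : ℂ)⁻¹) • !![1, 1, 1; 1, ω, ω ^ 2; 1, ω ^ 2, ω] := by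
  have h3 : ω ^ 3 = 1 := isPrimitiveRoot_ω.pow_eq_one
  have h4 : (ω ^ 2) ^ 2 = ω := by linear_combination ω * h3
  have hs : star ((Real.sqrt 3 : ℂ)⁻¹) = (Real.sqrt 3 : ℂ)⁻¹ := by simp
  rw [symA, conjTranspose_smul, hs]
  congr 1
  ext i j
  fin_cases i <;> fin_cases j <;>
    simp [-Complex.star_def, conjTranspose_apply, conj_ω, h4]

theorem sym_transform_balanced_line (zs zm : ℂ)
    (J : Matrix (Fin 3) (Fin 3) ℂ) (hJ : J = Matrix.of fun _ _ => 1)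
    (z : Matrix (Fin 3) (Fin 3) ℂ) (hz : z = zs • (1 : Matrix (Fin 3) (Fin 3) ℂ) + zm • (J - 1)) :
    symAᴴ * z * symA = Matrix.diagonal ![zs + 2 * zm, zs - zm, zs - zm] := by
  have h := one_add_ω_add_sq
  have h3 : ω ^ 3 = 1 := isPrimitiveRoot_ω.pow_eq_one
  have hs : (Real.sqrt 3 : ℂ)⁻¹ * (Real.sqrt 3 : ℂ)⁻¹ = 3⁻¹ := by
    rw [← mul_inv, ← Complex.ofReal_mul, Real.mul_self_sqrt (by norm_num)]
    norm_num
  have hzm : z = !![zs, zm, zm; zm, zs, zm; zm, zm, zs] := by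
    rw [hz, hJ]
    ext i j
    fin_cases i <;> fin_cases j <;> simp
  rw [conjTranspose_symA, symA, Matrix.smul_mul, Matrix.smul_mul, Matrix.mul_smul, smul_smul, hs,
    hzm]
  clear hz hzm hJ hs
  ext i j
  fin_cases i <;> fin_cases j <;> simp <;> grind
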